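/- Let (X, μ) be a probability space and f_1,...,f_N complex integrable functions with ∫_X f_n dμ = 0 for each n. Then for any p ≥ 1, ∫_{X^N} |∑_{n≤N} f_n(y_n)|^p dμ^N(y) ≤ ∫_{X^{2N}} |∑_{n≤2N} (-1)^n f_{⌈n/2⌉}(x_n)|^p dμ^{2N}(x). -/

import Mathlib

open MeasureTheory Finset

lemma mz_aux {Y : Type*} [MeasurableSpace Y] (ν : Measure Y) [IsProbabilityMeasure ν]
    (G : Y → ℂ) (hG : Integrable G ν) (hG0 : ∫ y, G y ∂ν = 0) (p : ℝ) (hp : 1 ≤ p) :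
    ∫ y, ‖G y‖ ^ p ∂ν ≤ ∫ z : Y × Y, ‖G z.1 - G z.2‖ ^ p ∂(ν.prod ν) := by
  have hp0 : 0 < p := by linarith
  have hpe : ENNReal.ofReal p ≠ 0 := by simpa using hp0
  have hpr : (ENNReal.ofReal p).toReal = p := ENNReal.toReal_ofReal hp0.le
  by_cases hI : Integrable (fun z : Y × Y => ‖G z.1 - G z.2‖ ^ p) (ν.prod ν)
  · rw [integral_prod _ hI]
    refine integral_mono_of_nonneg (.of_forall fun y => by positivity) hI.integral_prod_left ?_
    filter_upwards [hI.prod_right_ae] with y hy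
    have hd : Integrable (fun y' => G y - G y') ν := (integrable_const _).sub hG
    have h1 : G y = ∫ y', (G y - G y') ∂ν := by
      rw [integral_sub (integrable_const _) hG, hG0]; simp
    have h2 : ‖G y‖ ≤ ∫ y', ‖G y - G y'‖ ∂ν := by
      conv_lhs => rw [h1]
      exact norm_integral_le_integral_norm _
    have h3 : (∫ y', ‖G y - G y'‖ ∂ν) ^ p ≤ ∫ y', ‖G y - G y'‖ ^ p ∂ν := by
      refine (convexOn_rpow hp).map_integral_le (f := fun y' => ‖G y - G y'‖) ?_ isClosed_Ici ?_ hd.norm hy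
      · exact fun x _ => (Real.continuousAt_rpow_const x p (Or.inr hp0.le)).continuousWithinAt
      · exact .of_forall fun y' => norm_nonneg _
    exact (Real.rpow_le_rpow (norm_nonneg _) h2 hp0.le).trans h3
  · rw [integral_undef hI, integral_undef]
    intro h
    apply hI
    have hm : MemLp G (ENNReal.ofReal p) ν := by
      rw [← integrable_norm_rpow_iff hG.1 hpe ENNReal.ofReal_ne_top, hpr]; exact h
    have := ((hm.comp_fst ν).sub (hm.comp_snd ν)).integrable_norm_rpow hpe ENNReal.ofReal_ne_top
    rw [hpr] at this
    exact this

lemma mz_half (N : ℕ) (n : Fin (2 * N)) : (n : ℕ) / 2 < N := by omega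

/-- odd positions on the left, even positions on the right -/
def mzEquiv (N : ℕ) : Fin N ⊕ Fin N ≃ Fin (2 * N) where
  toFun := Sum.elim (fun i => ⟨2 * i + 1, by omega⟩) (fun i => ⟨2 * i, by omega⟩)
  invFun n := if (n : ℕ) % 2 = 1 then .inl ⟨n / 2, mz_half N n⟩ else .inr ⟨n / 2, mz_half N n⟩
  left_inv := by
    rintro (i | i)
    · have : (2 * (i : ℕ) + 1) % 2 = 1 := by omega
      simp only [Sum.elim_inl, this, if_true]
      congr 1; ext; simp; omega
    · have : ¬ (2 * (i : ℕ)) % 2 = 1 := by omega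
      simp only [Sum.elim_inr, this, if_false]
      congr 1; ext; simp
  right_inv := by
    intro n
    by_cases h : (n : ℕ) % 2 = 1
    · simp only [h, if_true, Sum.elim_inl]; ext; simp; omega
    · simp only [h, if_false, Sum.elim_inr]; ext; simp; omega

theorem mz_symmetrization {X : Type*} [MeasurableSpace X]
    (μ : Measure X) [IsProbabilityMeasure μ] (N : ℕ) (hN : 0 < N)
    (f : Fin N → X → ℂ) (hf : ∀ n, Integrable (f n) μ)
    (hf0 : ∀ n, ∫ x, f n x ∂μ = 0) (p : ℝ) (hp : 1 ≤ p) :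
    ∫ y : Fin N → X, ‖∑ n, f n (y n)‖ ^ p ∂(Measure.pi fun _ => μ)
      ≤ ∫ x : Fin (2 * N) → X,
          ‖∑ n : Fin (2 * N), (-1 : ℂ) ^ ((n : ℕ) + 1) *
            f ⟨(n : ℕ) / 2, by omega⟩ (x n)‖ ^ p ∂(Measure.pi fun _ => μ) := by
  set ν : Measure (Fin N → X) := Measure.pi fun _ => μ with hν
  have hev : ∀ n : Fin N, MeasurePreserving (fun y : Fin N → X => y n) ν μ := fun n =>
    measurePreserving_eval (fun _ => μ) n
  have hi : ∀ n : Fin N, Integrable (fun y : Fin N → X => f n (y n)) ν := fun n =>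
    (hev n).integrable_comp_of_integrable (hf n)
  have hG : Integrable (fun y : Fin N → X => ∑ n, f n (y n)) ν :=
    integrable_finsetSum _ fun n _ => hi n
  have hG0 : ∫ y : Fin N → X, ∑ n, f n (y n) ∂ν = 0 := by
    rw [integral_finsetSum _ fun n _ => hi n]
    refine Finset.sum_eq_zero fun n _ => ?_
    rw [← hf0 n, ← (hev n).map_eq, integral_map (hev n).measurable.aemeasurable]
    rw [(hev n).map_eq]; exact (hf n).1
  refine (mz_aux ν _ hG hG0 p hp).trans (le_of_eq ?_)
  have e1 := measurePreserving_piCongrLeft (fun _ : Fin (2 * N) => μ) (mzEquiv N)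
  have e2 := measurePreserving_sumPiEquivProdPi (fun _ : Fin N ⊕ Fin N => μ)
  rw [← e1.integral_comp' , ← e2.integral_comp']
  congr 1
  ext x
  congr 2
  rw [← (mzEquiv N).sum_comp, Fintype.sum_sum_type, sub_eq_add_neg, ← Finset.sum_neg_distrib]
  have hx : ∀ s, (MeasurableEquiv.piCongrLeft (fun _ : Fin (2 * N) => X) (mzEquiv N)) x
      (mzEquiv N s) = x s := fun s =>
    Equiv.piCongrLeft_apply_apply (fun _ : Fin (2 * N) => X) (mzEquiv N) x s
  simp only [hx]
  congr 1
  · refine Finset.sum_congr rfl fun i _ => ?_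
    have h1 : ((mzEquiv N (.inl i) : Fin (2 * N)) : ℕ) = 2 * i + 1 := rfl
    have h2 : (⟨((mzEquiv N (.inl i) : Fin (2 * N)) : ℕ) / 2, by omega⟩ : Fin N) = i := by
      ext; simp only [h1]; omega
    rw [h2, h1, show 2 * (i : ℕ) + 1 + 1 = 2 * (i + 1) by ring, pow_mul]
    simp [MeasurableEquiv.sumPiEquivProdPi]
  · refine Finset.sum_congr rfl fun i _ => ?_
    have h1 : ((mzEquiv N (.inr i) : Fin (2 * N)) : ℕ) = 2 * i := rfl
    have h2 : (⟨((mzEquiv N (.inr i) : Fin (2 * N)) : ℕ) / 2, by omega⟩ : Fin N) = i := by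
      ext; simp only [h1]; omega
    rw [h2, h1, pow_succ, pow_mul]
    simp [MeasurableEquiv.sumPiEquivProdPi]
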